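/- arXiv:1101.0182 — 2 statements merged into one kernel-verified Lean document; each statement's English description precedes it below -/
import Mathlib

section
/- With probability 1 − o(n^{−1}), the following holds: either |S₀| > (1/3)·n^{1−γ}, or every set S obtained from S₀ by repeatedly adding a vertex v outside the current set that has at least 4 out-neighbors in the current set in at least one of the digraphs D₁, D₂, D₃ (continuing until no such vertex exists, regardless of the order in which vertices are added) satisfies |S| ≤ n^{1−γ}. Here γ = min(1/4, ε₁θ₁/4, ε₃θ₃/4). -/
open MeasureTheory Filter

/-- The Bernoulli measure on `Bool` with success probability `p` (clamped into `[0,1]`;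
for `0 ≤ p ≤ 1` this is the genuine Bernoulli measure). -/
noncomputable def bernoulliM (p : ℝ) : Measure Bool :=
  (PMF.bernoulli (min (Real.toNNReal p) 1) (min_le_right _ _)).toMeasure

instance (p : ℝ) : IsProbabilityMeasure (bernoulliM p) := by
  unfold bernoulliM; infer_instance

/-- The random digraph `D_{n,p}`: each ordered pair of distinct vertices of `Fin n` is
independently a directed edge with probability `p` (the diagonal coordinates are sampled
but never consulted). -/
noncomputable def dnp (n : ℕ) (p : ℝ) : Measure (Fin n × Fin n → Bool) :=
  Measure.pi fun _ => bernoulliM p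

/-- `ε₁ = ε₂ = ε₃ = ε/3`. -/
noncomputable def eps1 (ε : ℝ) : ℝ := ε / 3

/-- `θ₁ = θ₃ = min(θ/3, ε₂/4)`. -/
noncomputable def th1 (ε θ : ℝ) : ℝ := min (θ / 3) (eps1 ε / 4)

/-- `θ₂ = θ - θ₁ - θ₃`. -/
noncomputable def th2 (ε θ : ℝ) : ℝ := θ - th1 ε θ - th1 ε θ

/-- `q₁ = p₁·θ₁/(1+θ)` with `p₁ = ε₁·log n/(2n)`. -/
noncomputable def q1 (n : ℕ) (ε θ : ℝ) : ℝ :=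
  eps1 ε * Real.log n / (2 * n) * (th1 ε θ / (1 + θ))

/-- `q₂ = p₂·(1+θ₂)/(1+θ)` with `p₂ = (1+ε₂)·log n/(2n)`. -/
noncomputable def q2 (n : ℕ) (ε θ : ℝ) : ℝ :=
  (1 + eps1 ε) * Real.log n / (2 * n) * ((1 + th2 ε θ) / (1 + θ))

/-- `q₃ = p₃·θ₃/(1+θ)` with `p₃ = ε₃·log n/(2n)`; since `ε₃ = ε₁` and `θ₃ = θ₁` this
coincides with `q₁`. -/
noncomputable def q3 (n : ℕ) (ε θ : ℝ) : ℝ :=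
  eps1 ε * Real.log n / (2 * n) * (th1 ε θ / (1 + θ))

/-- `γ = min(1/4, ε₁θ₁/4, ε₃θ₃/4)`. -/
noncomputable def gamParam (ε θ : ℝ) : ℝ :=
  min (1 / 4) (min (eps1 ε * th1 ε θ / 4) (eps1 ε * th1 ε θ / 4))

/-- Three mutually independent digraphs `D₁ ~ D_{n,q₁}`, `D₂ ~ D_{n,q₂}`, `D₃ ~ D_{n,q₃}`. -/
noncomputable def tripleM (n : ℕ) (ε θ : ℝ) :
    Measure ((Fin n × Fin n → Bool) × (Fin n × Fin n → Bool) × (Fin n × Fin n → Bool)) :=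
  (dnp n (q1 n ε θ)).prod ((dnp n (q2 n ε θ)).prod (dnp n (q3 n ε θ)))

/-- Out-degree `d⁺(v)` of `v` in the digraph `D`. -/
def outdeg {n : ℕ} (D : Fin n × Fin n → Bool) (v : Fin n) : ℕ :=
  (Finset.univ.filter fun w => w ≠ v ∧ D (v, w) = true).card

open scoped Classical in
/-- `S₀ = S_{0,1} ∪ S_{0,2} ∪ S_{0,3}`: the vertices of small out-degree in `D₁`, `D₂`
or `D₃` respectively. -/
noncomputable def lowDegSet (n : ℕ) (ε θ : ℝ)
    (ω : (Fin n × Fin n → Bool) × (Fin n × Fin n → Bool) × (Fin n × Fin n → Bool)) :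
    Finset (Fin n) :=
  Finset.univ.filter fun v =>
    (outdeg ω.1 v : ℝ) ≤ eps1 ε * th1 ε θ / 20 * Real.log n ∨
    (outdeg ω.2.1 v : ℝ) ≤ 1 / 20 * Real.log n ∨
    (outdeg ω.2.2 v : ℝ) ≤ eps1 ε * th1 ε θ / 20 * Real.log n


/-- `v ∉ A` has at least `4` out-neighbors inside `A` in one of the three digraphs. -/
def CanGrow4 {n : ℕ}
    (ω : (Fin n × Fin n → Bool) × (Fin n × Fin n → Bool) × (Fin n × Fin n → Bool))
    (A : Finset (Fin n)) (v : Fin n) : Prop :=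
  4 ≤ (A.filter fun w => w ≠ v ∧ ω.1 (v, w) = true).card ∨
  4 ≤ (A.filter fun w => w ≠ v ∧ ω.2.1 (v, w) = true).card ∨
  4 ≤ (A.filter fun w => w ≠ v ∧ ω.2.2 (v, w) = true).card

/-!
Suppose a run of the process starts from a set `S₀` with at most `N / 3` vertices, `N = n^(1-γ)`,
and exceeds `N`.  Vertices are added one at a time, so at some moment the current set `A` has
exactly `m = ⌊N⌋` vertices.  At least `m / 2` of them were added, and each sends at least four arcs
into `A` in one digraph; hence `A` spans at least `2 m` of the `3 m²` arcs available in the three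
digraphs together.  If all arc probabilities are at most `q = C log n / n`, the union bound over
`A` and over the set of `2 m` arcs gives probability at most
`(n choose m) (3 m² choose 2 m) q^(2 m) ≤ (9 e³ / 4 · m C² log² n / n)^m`.  As
`n^(-γ) log² n → 0`, this is at most `e^(-m) ≤ n^(-2)` for large `n`, uniformly over all starting
sets of at most `N / 3` vertices.
-/

open scoped Finset ENNReal Topology

section GrowthRun

variable {V : Type*} [DecidableEq V] {P : Finset V → V → Prop} {S : ℕ → Finset V} {T : ℕ}

/-- The sets `S 0, …, S T` are the stages of a process that repeatedly adds to the current set `A`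
a vertex `v ∉ A` satisfying `P A v`. The process may stop early, and the values of `S` after `T`
are irrelevant. -/
def IsGrowthRun (P : Finset V → V → Prop) (S : ℕ → Finset V) (T : ℕ) : Prop :=
  ∀ t < T, ∃ v ∉ S t, P (S t) v ∧ S (t + 1) = insert v (S t)

namespace IsGrowthRun

theorem exists_card_eq {m : ℕ} (hS : IsGrowthRun P S T) (h₀ : #(S 0) ≤ m) (hT : m ≤ #(S T)) :
    ∃ t ≤ T, #(S t) = m := by
  induction T with
  | zero => exact ⟨0, le_rfl, h₀.antisymm hT⟩
  | succ T ih =>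
    obtain hm | hm := le_or_gt m #(S T)
    · obtain ⟨t, ht, htm⟩ := ih (fun t ht => hS t (by omega)) hm
      exact ⟨t, by omega, htm⟩
    · obtain ⟨v, hv, -, hinsert⟩ := hS T T.lt_succ_self
      refine ⟨T + 1, le_rfl, ?_⟩
      rw [hinsert, Finset.card_insert_of_notMem hv] at hT ⊢
      omega

theorem of_mem_of_notMem_zero (hP : Monotone P) (hS : IsGrowthRun P S T) {t : ℕ} (ht : t ≤ T)
    {v : V} (hv : v ∈ S t) (hv₀ : v ∉ S 0) : P (S t) v := by
  induction t with
  | zero => exact absurd hv hv₀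
  | succ t ih =>
    obtain ⟨u, -, hu, hinsert⟩ := hS t ht
    have hsub : S t ≤ S (t + 1) := hinsert ▸ Finset.subset_insert u (S t)
    refine hP hsub v ?_
    rw [hinsert, Finset.mem_insert] at hv
    obtain rfl | hv := hv
    · exact hu
    · exact ih (by omega) hv

end IsGrowthRun

end GrowthRun

section ArcsWithin

variable {ι V : Type*} [Fintype ι] {D : ι → V × V → Bool} {A : Finset V}

/-- The arcs of the digraphs `D i` with both ends in `A`, each labelled by the digraph it belongs
to. Loops count as arcs, which is harmless for upper bounds on probabilities. -/
def arcsWithin (D : ι → V × V → Bool) (A : Finset V) : Finset (ι × V × V) :=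
  {x ∈ Finset.univ ×ˢ A ×ˢ A | D x.1 x.2 = true}

variable [DecidableEq V]

theorem le_card_arcsWithin_filter_fst_eq {k : ℕ} {v : V} (hv : v ∈ A)
    (h : ∃ i, k ≤ #{w ∈ A | D i (v, w) = true}) : k ≤ #{x ∈ arcsWithin D A | x.2.1 = v} := by
  obtain ⟨i, hi⟩ := h
  refine hi.trans (Finset.card_le_card_of_injOn (fun w => (i, v, w)) (fun w hw => ?_) ?_)
  · simp_all [arcsWithin]
  · exact fun w _ w' _ hww' => by simpa using hww'

theorem mul_card_sdiff_le_card_arcsWithin {k : ℕ} {S₀ : Finset V}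
    (h : ∀ v ∈ A \ S₀, ∃ i, k ≤ #{w ∈ A | D i (v, w) = true}) :
    k * #(A \ S₀) ≤ #(arcsWithin D A) :=
  calc k * #(A \ S₀) = ∑ _ ∈ A \ S₀, k := by simp [mul_comm]
    _ ≤ ∑ v ∈ A \ S₀, #{x ∈ arcsWithin D A | x.2.1 = v} := Finset.sum_le_sum fun v hv =>
        le_card_arcsWithin_filter_fst_eq (Finset.mem_sdiff.1 hv).1 (h v hv)
    _ = #{x ∈ arcsWithin D A | x.2.1 ∈ A \ S₀} := Finset.sum_card_fiberwise_eq_card_filter ..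
    _ ≤ #(arcsWithin D A) := Finset.card_filter_le _ _

end ArcsWithin

section DigraphTriple

/-- Three digraphs on the vertex set `Fin n`. -/
abbrev DigraphTriple (n : ℕ) : Type :=
  (Fin n × Fin n → Bool) × (Fin n × Fin n → Bool) × (Fin n × Fin n → Bool)

variable {n : ℕ} {ω : DigraphTriple n}

/-- The digraphs of a triple as a family indexed by `Fin 3`. -/
def layer (ω : DigraphTriple n) : Fin 3 → Fin n × Fin n → Bool :=
  ![ω.1, ω.2.1, ω.2.2]

theorem CanGrow4.exists_layer {A : Finset (Fin n)} {v : Fin n} (h : CanGrow4 ω A v) :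
    ∃ i, 4 ≤ #{w ∈ A | layer ω i (v, w) = true} := by
  have drop_ne (D : Fin n × Fin n → Bool) :
      #{w ∈ A | w ≠ v ∧ D (v, w) = true} ≤ #{w ∈ A | D (v, w) = true} :=
    Finset.card_le_card (Finset.monotone_filter_right A fun _ _ hw => hw.2)
  obtain h | h | h := h
  · exact ⟨0, h.trans (drop_ne _)⟩
  · exact ⟨1, h.trans (drop_ne _)⟩
  · exact ⟨2, h.trans (drop_ne _)⟩

theorem monotone_canGrow4 (ω : DigraphTriple n) : Monotone (CanGrow4 ω) := by
  intro A B hAB v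
  have mono (D : Fin n × Fin n → Bool) :
      #{w ∈ A | w ≠ v ∧ D (v, w) = true} ≤ #{w ∈ B | w ≠ v ∧ D (v, w) = true} :=
    Finset.card_le_card (Finset.filter_subset_filter _ hAB)
  exact Or.imp (mono _).trans' (Or.imp (mono _).trans' (mono _).trans')

theorem IsGrowthRun.exists_two_mul_le_card_arcsWithin {S : ℕ → Finset (Fin n)} {T m : ℕ}
    (hS : IsGrowthRun (CanGrow4 ω) S T) (h₀ : 2 * #(S 0) ≤ m) (hT : m ≤ #(S T)) :
    ∃ A : Finset (Fin n), #A = m ∧ 2 * m ≤ #(arcsWithin (layer ω) A) := by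
  obtain ⟨t, htT, htm⟩ := hS.exists_card_eq (by omega) hT
  have harcs : 4 * #(S t \ S 0) ≤ #(arcsWithin (layer ω) (S t)) :=
    mul_card_sdiff_le_card_arcsWithin fun _ hv =>
      (hS.of_mem_of_notMem_zero (monotone_canGrow4 ω) htT (Finset.mem_sdiff.1 hv).1
        (Finset.mem_sdiff.1 hv).2).exists_layer
  have hadded : #(S t) - #(S 0) ≤ #(S t \ S 0) := Finset.le_card_sdiff _ _
  exact ⟨S t, htm, by omega⟩

end DigraphTriple

section JointProbLE

variable {Ω α : Type*} [MeasurableSpace Ω] {μ : Measure Ω} {X : α → Set Ω} {q : ℝ≥0∞}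

/-- Any `k` distinct events among the `X e` occur simultaneously with probability at most `q ^ k`,
as they do when they are independent and have probability at most `q`. -/
def JointProbLE (μ : Measure Ω) (X : α → Set Ω) (q : ℝ≥0∞) : Prop :=
  ∀ E : Finset α, μ (⋂ e ∈ E, X e) ≤ q ^ #E

open scoped Classical in
theorem JointProbLE.measure_le_card_filter_le (h : JointProbLE μ X q) (F : Finset α) (k : ℕ) :
    μ {ω | k ≤ #{e ∈ F | ω ∈ X e}} ≤ (#F).choose k * q ^ k := by
  have hcover : {ω | k ≤ #{e ∈ F | ω ∈ X e}} ⊆ ⋃ E ∈ F.powersetCard k, ⋂ e ∈ E, X e := by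
    intro ω hω
    obtain ⟨E, hEF, hE⟩ := Finset.exists_subset_card_eq hω
    simp only [Set.mem_iUnion, Set.mem_iInter, Finset.mem_powersetCard]
    exact ⟨E, ⟨hEF.trans (Finset.filter_subset _ _), hE⟩,
      fun e he => (Finset.mem_filter.1 (hEF he)).2⟩
  calc μ {ω | k ≤ #{e ∈ F | ω ∈ X e}}
      ≤ ∑ E ∈ F.powersetCard k, μ (⋂ e ∈ E, X e) :=
        (measure_mono hcover).trans (measure_biUnion_finset_le _ _)
    _ ≤ ∑ _ ∈ F.powersetCard k, q ^ k := Finset.sum_le_sum fun E hE =>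
        (h E).trans_eq (by rw [(Finset.mem_powersetCard.1 hE).2])
    _ = (#F).choose k * q ^ k := by simp

theorem JointProbLE.measure_exists_le_card_arcsWithin_le {ι V : Type*} [Fintype ι] [Fintype V]
    {D : Ω → ι → V × V → Bool}
    (h : JointProbLE μ (fun x : ι × V × V => {ω | D ω x.1 x.2 = true}) q) (m k : ℕ) :
    μ {ω | ∃ A : Finset V, #A = m ∧ k ≤ #(arcsWithin (D ω) A)} ≤
      (Fintype.card V).choose m * ((Fintype.card ι * (m * m)).choose k * q ^ k) := by
  have hcover : {ω | ∃ A : Finset V, #A = m ∧ k ≤ #(arcsWithin (D ω) A)} =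
      ⋃ A ∈ Finset.univ.powersetCard m, {ω | k ≤ #(arcsWithin (D ω) A)} := by
    ext ω
    simp
  have hfixed (A : Finset V) (hA : #A = m) : μ {ω | k ≤ #(arcsWithin (D ω) A)} ≤
      (Fintype.card ι * (m * m)).choose k * q ^ k := by
    have hcard : #((Finset.univ : Finset ι) ×ˢ A ×ˢ A) = Fintype.card ι * (m * m) := by
      simp only [Finset.card_product, Finset.card_univ, hA]
    simpa [arcsWithin, hcard] using h.measure_le_card_filter_le (Finset.univ ×ˢ A ×ˢ A) k
  calc μ {ω | ∃ A : Finset V, #A = m ∧ k ≤ #(arcsWithin (D ω) A)}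
      ≤ ∑ A ∈ Finset.univ.powersetCard m, μ {ω | k ≤ #(arcsWithin (D ω) A)} :=
        hcover ▸ measure_biUnion_finset_le _ _
    _ ≤ ∑ _ ∈ (Finset.univ : Finset V).powersetCard m,
          (Fintype.card ι * (m * m)).choose k * q ^ k :=
        Finset.sum_le_sum fun A hA => hfixed A (Finset.mem_powersetCard.1 hA).2
    _ = (Fintype.card V).choose m * ((Fintype.card ι * (m * m)).choose k * q ^ k) := by simp

end JointProbLE

section ArcProbabilities

variable {p p₁ p₂ p₃ q : ℝ}

theorem bernoulliM_singleton_true_le (p : ℝ) : bernoulliM p {true} ≤ ENNReal.ofReal p := by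
  rw [bernoulliM, PMF.toMeasure_apply_singleton _ _ (MeasurableSet.singleton _)]
  exact ENNReal.coe_le_coe.2 (min_le_left _ _)

theorem jointProbLE_dnp (n : ℕ) (h : p ≤ q) :
    JointProbLE (dnp n p) (fun e => {D | D e = true}) (ENNReal.ofReal q) := by
  intro E
  have hpi : ⋂ e ∈ E, {D : Fin n × Fin n → Bool | D e = true} =
      (E : Set (Fin n × Fin n)).pi fun _ => {true} := by
    ext D
    simp
  calc dnp n p (⋂ e ∈ E, {D | D e = true})
      = bernoulliM p {true} ^ #E := by
        rw [hpi, dnp, ← Measure.infinitePi_eq_pi,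
          Measure.infinitePi_pi _ fun _ _ => MeasurableSet.singleton _, Finset.prod_const]
    _ ≤ ENNReal.ofReal q ^ #E := by
        gcongr
        exact (bernoulliM_singleton_true_le p).trans (ENNReal.ofReal_le_ofReal h)

instance (n : ℕ) (p : ℝ) : IsProbabilityMeasure (dnp n p) := by
  unfold dnp; infer_instance

/-- Three independent random digraphs `D_{n,p₁}`, `D_{n,p₂}`, `D_{n,p₃}`. -/
noncomputable def tripleDnp (n : ℕ) (p₁ p₂ p₃ : ℝ) : Measure (DigraphTriple n) :=
  (dnp n p₁).prod ((dnp n p₂).prod (dnp n p₃))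

theorem card_eq_sum_card_sections {ι α : Type*} [Fintype ι] [Fintype α] [DecidableEq ι]
    [DecidableEq α] (E : Finset (ι × α)) : #E = ∑ i, #{e | (i, e) ∈ E} := by
  simp only [Finset.card_filter, ← Fintype.sum_prod_type', Prod.mk.eta]
  simp

theorem jointProbLE_tripleDnp (n : ℕ) (h₁ : p₁ ≤ q) (h₂ : p₂ ≤ q) (h₃ : p₃ ≤ q) :
    JointProbLE (tripleDnp n p₁ p₂ p₃)
      (fun x : Fin 3 × Fin n × Fin n => {ω | layer ω x.1 x.2 = true}) (ENNReal.ofReal q) := by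
  intro E
  let F (i : Fin 3) : Finset (Fin n × Fin n) := {e | (i, e) ∈ E}
  let full (i : Fin 3) : Set (Fin n × Fin n → Bool) := ⋂ e ∈ F i, {D | D e = true}
  have hprod : ⋂ x ∈ E, {ω : DigraphTriple n | layer ω x.1 x.2 = true} =
      full 0 ×ˢ full 1 ×ˢ full 2 := by
    ext ω
    simp [full, F, layer, Fin.forall_fin_succ]
  calc tripleDnp n p₁ p₂ p₃ (⋂ x ∈ E, {ω | layer ω x.1 x.2 = true})
      = dnp n p₁ (full 0) * (dnp n p₂ (full 1) * dnp n p₃ (full 2)) := by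
        rw [hprod, tripleDnp, Measure.prod_prod, Measure.prod_prod]
    _ ≤ ENNReal.ofReal q ^ #(F 0) * (ENNReal.ofReal q ^ #(F 1) * ENNReal.ofReal q ^ #(F 2)) := by
        gcongr
        exacts [jointProbLE_dnp n h₁ _, jointProbLE_dnp n h₂ _, jointProbLE_dnp n h₃ _]
    _ = ENNReal.ofReal q ^ #E := by
        rw [card_eq_sum_card_sections E, Fin.sum_univ_three, pow_add, pow_add, mul_assoc]

end ArcProbabilities

section Outgrowth

theorem choose_le_exp_one_mul_div_pow (n m : ℕ) :
    (n.choose m : ℝ) ≤ (Real.exp 1 * n / m) ^ m := by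
  obtain rfl | hm := m.eq_zero_or_pos
  · simp
  calc (n.choose m : ℝ) ≤ (n : ℝ) ^ m / m.factorial := Nat.choose_le_pow_div m n
    _ = ((n : ℝ) / m) ^ m * ((m : ℝ) ^ m / m.factorial) := by rw [div_pow]; field_simp
    _ ≤ ((n : ℝ) / m) ^ m * Real.exp m := by
        gcongr
        exact Real.pow_div_factorial_le_exp m (by positivity) m
    _ = (Real.exp 1 * n / m) ^ m := by rw [← Real.exp_one_pow m, ← mul_pow]; ring

theorem choose_mul_choose_mul_pow_le {n : ℕ} (hn : n ≠ 0) (c m : ℕ) {L : ℝ} (hL : 0 ≤ L) :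
    (n.choose m : ℝ) * ((c * (m * m)).choose (2 * m) * (L / n) ^ (2 * m)) ≤
      (Real.exp 1 ^ 3 * c ^ 2 / 4 * (m * L ^ 2 / n)) ^ m := by
  obtain rfl | hm := eq_or_ne m 0
  · simp
  have hsets := choose_le_exp_one_mul_div_pow n m
  have harcs := choose_le_exp_one_mul_div_pow (c * (m * m)) (2 * m)
  push_cast at harcs
  calc (n.choose m : ℝ) * ((c * (m * m)).choose (2 * m) * (L / n) ^ (2 * m))
      ≤ (Real.exp 1 * n / m) ^ m *
          ((Real.exp 1 * (c * (m * m)) / (2 * m)) ^ (2 * m) * (L / n) ^ (2 * m)) := by gcongr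
    _ = (Real.exp 1 * n / m *
          ((Real.exp 1 * (c * (m * m)) / (2 * m)) ^ 2 * (L / n) ^ 2)) ^ m := by
        rw [mul_pow, mul_pow, ← pow_mul, ← pow_mul]
    _ = (Real.exp 1 ^ 3 * c ^ 2 / 4 * (m * L ^ 2 / n)) ^ m := by
        congr 1
        field_simp
        ring

/-- The event that the absorption process outgrows the size `N`: some run starting from at most
`N / 3` vertices reaches more than `N` vertices. -/
def outgrowthEvent (n : ℕ) (N : ℝ) : Set (DigraphTriple n) :=
  {ω | ∃ S T, IsGrowthRun (CanGrow4 ω) S T ∧ (#(S 0) : ℝ) ≤ 1 / 3 * N ∧ N < #(S T)}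

theorem outgrowthEvent_subset {n : ℕ} {N : ℝ} (hN : 3 ≤ N) :
    outgrowthEvent n N ⊆
      {ω | ∃ A, #A = ⌊N⌋₊ ∧ 2 * ⌊N⌋₊ ≤ #(arcsWithin (layer ω) A)} := by
  rintro ω ⟨S, T, hS, h₀, hT⟩
  have hfloor : N < ⌊N⌋₊ + 1 := Nat.lt_floor_add_one N
  have h₀' : 2 * #(S 0) ≤ ⌊N⌋₊ := by
    exact_mod_cast (by linarith : (2 : ℝ) * #(S 0) ≤ ⌊N⌋₊)
  exact hS.exists_two_mul_le_card_arcsWithin h₀' (Nat.floor_le_of_le hT.le)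

theorem measure_outgrowthEvent_le {n : ℕ} (hn : n ≠ 0) {p₁ p₂ p₃ L N : ℝ} (hL : 0 ≤ L)
    (h₁ : p₁ ≤ L / n) (h₂ : p₂ ≤ L / n) (h₃ : p₃ ≤ L / n) (hN : 3 ≤ N) :
    (tripleDnp n p₁ p₂ p₃ (outgrowthEvent n N)).toReal ≤
      (Real.exp 1 ^ 3 * 3 ^ 2 / 4 * (N * L ^ 2 / n)) ^ ⌊N⌋₊ := by
  have hunion := (measure_mono (outgrowthEvent_subset hN)).trans
    ((jointProbLE_tripleDnp n h₁ h₂ h₃).measure_exists_le_card_arcsWithin_le ⌊N⌋₊ (2 * ⌊N⌋₊))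
  calc (tripleDnp n p₁ p₂ p₃ (outgrowthEvent n N)).toReal
      ≤ n.choose ⌊N⌋₊ *
          ((3 * (⌊N⌋₊ * ⌊N⌋₊)).choose (2 * ⌊N⌋₊) * (L / n) ^ (2 * ⌊N⌋₊)) := by
        simpa [ENNReal.toReal_ofReal (show 0 ≤ L / n by positivity)] using
          ENNReal.toReal_mono (by finiteness) hunion
    _ ≤ (Real.exp 1 ^ 3 * (3 : ℕ) ^ 2 / 4 * (⌊N⌋₊ * L ^ 2 / n)) ^ ⌊N⌋₊ :=
        choose_mul_choose_mul_pow_le hn 3 ⌊N⌋₊ hL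
    _ ≤ (Real.exp 1 ^ 3 * 3 ^ 2 / 4 * (N * L ^ 2 / n)) ^ ⌊N⌋₊ := by
        push_cast
        gcongr
        exact Nat.floor_le (by linarith)

end Outgrowth

section Asymptotics

variable {γ : ℕ → ℝ}

theorem tendsto_log_natCast_atTop : Tendsto (fun n : ℕ => Real.log n) atTop atTop :=
  Real.tendsto_log_atTop.comp tendsto_natCast_atTop_atTop

theorem tendsto_rpow_one_sub_mul_log_sq_div
    (hγ : Tendsto (fun n : ℕ => γ n * Real.log n - 2 * Real.log (Real.log n)) atTop atTop) :
    Tendsto (fun n : ℕ => (n : ℝ) ^ (1 - γ n) * Real.log n ^ 2 / n) atTop (𝓝 0) := by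
  refine (Real.tendsto_exp_neg_atTop_nhds_zero.comp hγ).congr' ?_
  filter_upwards [eventually_gt_atTop 0, tendsto_log_natCast_atTop.eventually_gt_atTop 0]
    with n hn hlog
  have hn' : (0 : ℝ) < n := Nat.cast_pos.2 hn
  have hrpow : (n : ℝ) ^ (1 - γ n) = n * Real.exp (-(γ n * Real.log n)) := by
    rw [Real.rpow_def_of_pos hn', mul_one_sub, sub_eq_add_neg, Real.exp_add, Real.exp_log hn',
      mul_comm (Real.log n)]
  have hsq : Real.exp (2 * Real.log (Real.log n)) = Real.log n ^ 2 := by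
    rw [two_mul, Real.exp_add, Real.exp_log hlog, sq]
  calc Real.exp (-(γ n * Real.log n - 2 * Real.log (Real.log n)))
      = Real.exp (-(γ n * Real.log n)) * Real.exp (2 * Real.log (Real.log n)) := by
        rw [← Real.exp_add]
        congr 1
        ring
    _ = (n : ℝ) ^ (1 - γ n) * Real.log n ^ 2 / n := by
        rw [hrpow, hsq]
        field_simp

theorem eventually_three_mul_log_le_rpow_one_sub {c : ℝ} (hc : c < 1)
    (hγ : ∀ᶠ n in atTop, γ n ≤ c) :
    ∀ᶠ n : ℕ in atTop, 3 * Real.log n ≤ (n : ℝ) ^ (1 - γ n) := by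
  have hlog := ((isLittleO_log_rpow_atTop (sub_pos.2 hc)).comp_tendsto
    tendsto_natCast_atTop_atTop).bound (show (0 : ℝ) < 1 / 3 by norm_num)
  filter_upwards [hγ, hlog, eventually_ge_atTop 1] with n hγn hlogn hn
  simp only [Function.comp_apply, Real.norm_of_nonneg (Real.log_natCast_nonneg n),
    Real.norm_of_nonneg (Real.rpow_nonneg n.cast_nonneg (1 - c))] at hlogn
  calc 3 * Real.log n ≤ (n : ℝ) ^ (1 - c) := by linarith
    _ ≤ (n : ℝ) ^ (1 - γ n) :=
        Real.rpow_le_rpow_of_exponent_le (Nat.one_le_cast.2 hn) (by linarith)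

theorem tendsto_mul_log_sub_two_mul_log_log_atTop
    (hγ : ∀ᶠ n : ℕ in atTop, 1 / Real.log (Real.log n) ≤ γ n) :
    Tendsto (fun n : ℕ => γ n * Real.log n - 2 * Real.log (Real.log n)) atTop atTop := by
  have hloglog := Real.tendsto_log_atTop.comp tendsto_log_natCast_atTop
  refine tendsto_atTop_mono' _ ?_ hloglog
  filter_upwards [hγ, tendsto_log_natCast_atTop.eventually_gt_atTop 0,
    hloglog.eventually_gt_atTop 0,
    ((Real.tendsto_exp_div_pow_atTop 2).comp hloglog).eventually_ge_atTop 3]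
    with n hγn hlog hy hexp
  simp only [Function.comp_apply] at hy hexp ⊢
  rw [Real.exp_log hlog] at hexp
  have : 3 * Real.log (Real.log n) ≤ γ n * Real.log n :=
    calc 3 * Real.log (Real.log n)
        ≤ Real.log n / Real.log (Real.log n) ^ 2 * Real.log (Real.log n) := by gcongr
      _ = 1 / Real.log (Real.log n) * Real.log n := by field_simp
      _ ≤ γ n * Real.log n := by gcongr
  linarith

theorem eventually_measure_outgrowthEvent_le {p₁ p₂ p₃ : ℕ → ℝ} {C c : ℝ} (hC : 0 ≤ C)
    (hp₁ : ∀ᶠ n : ℕ in atTop, p₁ n ≤ C * Real.log n / n)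
    (hp₂ : ∀ᶠ n : ℕ in atTop, p₂ n ≤ C * Real.log n / n)
    (hp₃ : ∀ᶠ n : ℕ in atTop, p₃ n ≤ C * Real.log n / n)
    (hγ : Tendsto (fun n : ℕ => γ n * Real.log n - 2 * Real.log (Real.log n)) atTop atTop)
    (hc : c < 1) (hγc : ∀ᶠ n in atTop, γ n ≤ c) :
    ∀ᶠ n : ℕ in atTop,
      (tripleDnp n (p₁ n) (p₂ n) (p₃ n) (outgrowthEvent n ((n : ℝ) ^ (1 - γ n)))).toReal ≤
        1 / (n : ℝ) ^ 2 := by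
  have hbase : ∀ᶠ n : ℕ in atTop, Real.exp 1 ^ 3 * 3 ^ 2 / 4 *
      ((n : ℝ) ^ (1 - γ n) * (C * Real.log n) ^ 2 / n) ≤ Real.exp (-1) := by
    have hlim := (tendsto_rpow_one_sub_mul_log_sq_div hγ).const_mul
      (Real.exp 1 ^ 3 * 3 ^ 2 / 4 * C ^ 2)
    rw [mul_zero] at hlim
    filter_upwards [hlim.eventually_le_const (Real.exp_pos (-1))] with n hn
    exact le_of_eq_of_le (by ring) hn
  filter_upwards [eventually_gt_atTop 0, hp₁, hp₂, hp₃, hbase,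
    eventually_three_mul_log_le_rpow_one_sub hc hγc,
    tendsto_log_natCast_atTop.eventually_ge_atTop 1] with n hn h₁ h₂ h₃ hbase hlogN hlog
  set N := (n : ℝ) ^ (1 - γ n)
  have hfloor : N < ⌊N⌋₊ + 1 := Nat.lt_floor_add_one N
  calc (tripleDnp n (p₁ n) (p₂ n) (p₃ n) (outgrowthEvent n N)).toReal
      ≤ (Real.exp 1 ^ 3 * 3 ^ 2 / 4 * (N * (C * Real.log n) ^ 2 / n)) ^ ⌊N⌋₊ :=
        measure_outgrowthEvent_le hn.ne' (by positivity) h₁ h₂ h₃ (by linarith)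
    _ ≤ Real.exp (-1) ^ ⌊N⌋₊ := by gcongr
    _ = Real.exp (-⌊N⌋₊) := by rw [← Real.exp_nat_mul, mul_neg_one]
    _ ≤ Real.exp (-(2 * Real.log n)) := by gcongr; linarith
    _ = 1 / (n : ℝ) ^ 2 := by
        rw [Real.exp_neg, two_mul, Real.exp_add, Real.exp_log (Nat.cast_pos.2 hn), one_div, sq]

theorem absorbed_set_small_whp_general {p₁ p₂ p₃ : ℕ → ℝ} {C c : ℝ} (hC : 0 ≤ C)
    (hp₁ : ∀ᶠ n : ℕ in atTop, p₁ n ≤ C * Real.log n / n)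
    (hp₂ : ∀ᶠ n : ℕ in atTop, p₂ n ≤ C * Real.log n / n)
    (hp₃ : ∀ᶠ n : ℕ in atTop, p₃ n ≤ C * Real.log n / n)
    (hγ : Tendsto (fun n : ℕ => γ n * Real.log n - 2 * Real.log (Real.log n)) atTop atTop)
    (hc : c < 1) (hγc : ∀ᶠ n in atTop, γ n ≤ c) :
    Tendsto
      (fun n : ℕ => (n : ℝ) *
        (tripleDnp n (p₁ n) (p₂ n) (p₃ n) (outgrowthEvent n ((n : ℝ) ^ (1 - γ n)))).toReal)
      atTop (𝓝 0) := by
  refine squeeze_zero' (.of_forall fun n => by positivity) ?_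
    tendsto_one_div_atTop_nhds_zero_nat
  filter_upwards [eventually_measure_outgrowthEvent_le hC hp₁ hp₂ hp₃ hγ hc hγc,
    eventually_ne_atTop 0] with n hle hn
  calc (n : ℝ) *
        (tripleDnp n (p₁ n) (p₂ n) (p₃ n) (outgrowthEvent n ((n : ℝ) ^ (1 - γ n)))).toReal
      ≤ n * (1 / (n : ℝ) ^ 2) := by gcongr
    _ = 1 / n := by field_simp

end Asymptotics

section Parameters

variable {ε θ : ℝ}

theorem th1_nonneg (hε : 0 ≤ ε) (hθ : 0 ≤ θ) : 0 ≤ th1 ε θ :=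
  le_min (by linarith) (by unfold eps1; linarith)

theorem q1_le_log_div (n : ℕ) (hε : 0 ≤ ε) (hε₁ : ε ≤ 1) (hθ : 0 ≤ θ) :
    q1 n ε θ ≤ Real.log n / n := by
  have hlog : 0 ≤ Real.log n / n := div_nonneg (Real.log_natCast_nonneg n) n.cast_nonneg
  have hth : th1 ε θ / (1 + θ) ≤ 1 :=
    div_le_one_of_le₀ ((min_le_left _ _).trans (by linarith)) (by linarith)
  have heps : eps1 ε / 2 ≤ 1 := by unfold eps1; linarith
  have hth₀ : 0 ≤ th1 ε θ / (1 + θ) := div_nonneg (th1_nonneg hε hθ) (by linarith)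
  calc q1 n ε θ = Real.log n / n * (eps1 ε / 2 * (th1 ε θ / (1 + θ))) := by unfold q1; ring
    _ ≤ Real.log n / n := mul_le_of_le_one_right hlog (mul_le_one₀ heps hth₀ hth)

theorem q2_le_log_div (n : ℕ) (hε : 0 ≤ ε) (hε₁ : ε ≤ 1) (hθ : 0 ≤ θ) :
    q2 n ε θ ≤ Real.log n / n := by
  have hlog : 0 ≤ Real.log n / n := div_nonneg (Real.log_natCast_nonneg n) n.cast_nonneg
  have hth : (1 + th2 ε θ) / (1 + θ) ≤ 1 := by
    rw [div_le_one (by linarith), th2]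
    linarith [th1_nonneg hε hθ]
  have heps₀ : 0 ≤ (1 + eps1 ε) / 2 := by unfold eps1; linarith
  have heps : (1 + eps1 ε) / 2 ≤ 1 := by unfold eps1; linarith
  calc q2 n ε θ = Real.log n / n * ((1 + eps1 ε) / 2 * ((1 + th2 ε θ) / (1 + θ))) := by
        unfold q2; ring
    _ ≤ Real.log n / n :=
        mul_le_of_le_one_right hlog ((mul_le_of_le_one_right heps₀ hth).trans heps)

theorem sq_le_gamParam {r : ℝ} (hr : 0 ≤ r) (hr₂ : r ≤ 1 / 2) (hε : 100 * r ≤ ε)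
    (hθ : 100 * r ≤ θ) : r ^ 2 ≤ gamParam ε θ := by
  have heps : 33 * r ≤ eps1 ε := by unfold eps1; linarith
  have hth : 8 * r ≤ th1 ε θ := le_min (by linarith) (by linarith)
  have hmul : 33 * r * (8 * r) ≤ eps1 ε * th1 ε θ := by gcongr; linarith
  have hprod : r ^ 2 ≤ eps1 ε * th1 ε θ / 4 := by nlinarith
  exact le_min (by nlinarith) (le_min hprod hprod)

theorem one_div_le_gamParam {y : ℝ} (hy : 4 ≤ y) (hε : 100 / √y ≤ ε) (hθ : 100 / √y ≤ θ) :
    1 / y ≤ gamParam ε θ := by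
  have hsqrt : 2 ≤ √y := Real.le_sqrt_of_sq_le (by linarith)
  have hsq : (1 / √y) ^ 2 = 1 / y := by rw [div_pow, one_pow, Real.sq_sqrt (by linarith)]
  rw [← hsq]
  exact sq_le_gamParam (by positivity) (by gcongr) (by rwa [mul_one_div]) (by rwa [mul_one_div])

instance (n : ℕ) (ε θ : ℝ) : IsProbabilityMeasure (tripleM n ε θ) := by
  unfold tripleM; infer_instance

end Parameters

section EventualParameters

variable {ε θ : ℕ → ℝ}

theorem eventually_q1_le_and_q2_le
    (hε : ∀ᶠ n : ℕ in atTop, 100 / √(Real.log (Real.log n)) < ε n ∧ ε n ≤ 1)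
    (hθ : ∀ᶠ n : ℕ in atTop, 100 / √(Real.log (Real.log n)) < θ n) :
    ∀ᶠ n : ℕ in atTop,
      q1 n (ε n) (θ n) ≤ 1 * Real.log n / n ∧ q2 n (ε n) (θ n) ≤ 1 * Real.log n / n := by
  filter_upwards [hε, hθ] with n ⟨hεlow, hεone⟩ hθlow
  have hε₀ : 0 ≤ ε n := le_trans (by positivity) hεlow.le
  have hθ₀ : 0 ≤ θ n := le_trans (by positivity) hθlow.le
  rw [one_mul]
  exact ⟨q1_le_log_div n hε₀ hεone hθ₀, q2_le_log_div n hε₀ hεone hθ₀⟩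

theorem eventually_one_div_log_log_le_gamParam
    (hε : ∀ᶠ n : ℕ in atTop, 100 / √(Real.log (Real.log n)) < ε n)
    (hθ : ∀ᶠ n : ℕ in atTop, 100 / √(Real.log (Real.log n)) < θ n) :
    ∀ᶠ n : ℕ in atTop, 1 / Real.log (Real.log n) ≤ gamParam (ε n) (θ n) := by
  filter_upwards [hε, hθ, (Real.tendsto_log_atTop.comp
    tendsto_log_natCast_atTop).eventually_ge_atTop 4] with n hεn hθn hy
  exact one_div_le_gamParam hy hεn.le hθn.le

end EventualParameters

/-- With probability `1 - o(n⁻¹)`: either `|S₀| > (1/3)·n^{1-γ}`, or every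
set obtained from `S₀` by repeatedly adding a vertex outside the current set having at
least `4` out-neighbors in the current set in one of `D₁, D₂, D₃`, continued until no such
vertex exists (in any order), has at most `n^{1-γ}` elements.  Here
`γ = min(1/4, ε₁θ₁/4, ε₃θ₃/4)`. -/
theorem absorbed_set_small_whp (ε θ : ℕ → ℝ)
    (hε : ∀ᶠ n : ℕ in atTop,
      100 / Real.sqrt (Real.log (Real.log n)) < ε n ∧ ε n ≤ 1)
    (hθ : ∀ᶠ n : ℕ in atTop,
      100 / Real.sqrt (Real.log (Real.log n)) < θ n ∧ θ n ≤ 1) :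
    Tendsto
      (fun n : ℕ =>
        (n : ℝ) *
          (tripleM n (ε n) (θ n)
            {ω | ¬ (1 / 3 * (n : ℝ) ^ (1 - gamParam (ε n) (θ n)) <
                      ((lowDegSet n (ε n) (θ n) ω).card : ℝ) ∨
                    ∀ (S : ℕ → Finset (Fin n)) (T : ℕ),
                      S 0 = lowDegSet n (ε n) (θ n) ω →
                      (∀ t < T, ∃ v ∉ S t,
                        CanGrow4 ω (S t) v ∧ S (t + 1) = insert v (S t)) →
                      (¬ ∃ v ∉ S T, CanGrow4 ω (S T) v) →
                      ((S T).card : ℝ) ≤ (n : ℝ) ^ (1 - gamParam (ε n) (θ n)))}).toReal)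
      atTop (nhds 0) := by
  have hθlow := hθ.mono fun _ h => h.1
  have hq := eventually_q1_le_and_q2_le hε hθlow
  have hq₁ := hq.mono fun _ h => h.1
  have hq₂ := hq.mono fun _ h => h.2
  have hγ := eventually_one_div_log_log_le_gamParam (hε.mono fun _ h => h.1) hθlow
  refine squeeze_zero (fun n => by positivity) (fun n => ?_)
    (absorbed_set_small_whp_general zero_le_one hq₁ hq₂ hq₁
      (tendsto_mul_log_sub_two_mul_log_log_atTop hγ) (show (1 / 4 : ℝ) < 1 by norm_num)
      (.of_forall fun n => min_le_left _ _))
  refine mul_le_mul_of_nonneg_left (measureReal_mono (μ := tripleM n (ε n) (θ n)) fun ω hω => ?_)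
    n.cast_nonneg
  simp only [Set.mem_ofPred_eq, not_or, not_lt, not_forall, not_le] at hω
  obtain ⟨h₀, S, T, hS₀, hrun, -, hT⟩ := hω
  exact ⟨S, T, hrun, hS₀ ▸ h₀, hT⟩
end

section
/- Let θ₁ = θ₁(n) ∈ (0,1], L = L(n) with L ≥ 7/θ₁ and L ≤ (log n)^{1/6}, and β = β(n) ≥ 277/(log log n). Let r = r(n) be a positive integer with r ≤ n/L. Suppose each of 2r agents independently samples a list of at least (β/(200L))·log n colors, each color chosen independently and uniformly at random from a palette of ⌊θ₁·n⌋ colors. Then with high probability it is possible to select 3 colors from each agent's list of sampled colors so that all 6r selected colors are pairwise distinct. -/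
open MeasureTheory Filter

/-- The uniform probability measure on a finite set (zero measure if the set is empty). -/
noncomputable def uniformOn {α : Type*} [MeasurableSpace α] (s : Finset α) : Measure α :=
  if h : s.Nonempty then (PMF.uniformOfFinset s h).toMeasure else 0

instance {α : Type*} [MeasurableSpace α] (s : Finset α) : SigmaFinite (uniformOn s) := by
  unfold uniformOn
  split
  · infer_instance
  · infer_instance

/-- The sampling measure: `2r` agents, agent `a` independently samples a list of `ℓ a`
colors, each chosen independently and uniformly at random from a palette of `C` colors. -/
noncomputable def samplingM (r C : ℕ) (ℓ : Fin (2 * r) → ℕ) :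
    Measure (∀ a : Fin (2 * r), Fin (ℓ a) → Fin C) :=
  Measure.pi fun a =>
    Measure.pi fun _ : Fin (ℓ a) => uniformOn (Finset.univ : Finset (Fin C))

/-- From each agent's sampled list one can select `3` colors occurring in the list so
that all `6r` selected colors are pairwise distinct. -/
def CanSelectThreeRainbow {r C : ℕ} {ℓ : Fin (2 * r) → ℕ}
    (x : ∀ a : Fin (2 * r), Fin (ℓ a) → Fin C) : Prop :=
  ∃ sel : Fin (2 * r) → Finset (Fin C),
    (∀ a, (sel a).card = 3 ∧ ∀ col ∈ sel a, ∃ i, x a i = col) ∧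
    ∀ a b, a ≠ b → Disjoint (sel a) (sel b)

/-!
By Hall's theorem the selection fails only if, for some `k ≥ 1`, the lists of some `k` agents all
lie in a set of `3k` of the `C` colors.  If `N` agents satisfy `3N ≤ ρC` with `ρ < 1` and the
lists have length at least `s = 4 + t`, the union bound together with
`N.choose k ≤ (eN/k)^k` and `C.choose (3k) ≤ (eC/3k)^(3k)` bounds the probability of failure by

  `∑_{k ≥ 1} (N.choose k) (C.choose (3k)) (3k/C)^(ks) ≤ ∑_{k ≥ 1} (e⁴ ρ^t)^k`,

because four of the `s` factors `3k/C ≤ ρ` are absorbed by the binomials.  The right-hand side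
tends to `0` as `t → ∞`.  Here `ρ = 6/7`, and `L ≤ (log n)^{1/6}` makes the lists at least of the
order of `(log n)^{5/6} / log log n`.
-/

open scoped Finset ENNReal

section Hall

variable {ι α : Type*} [DecidableEq α]

-- Hall's theorem, applied to `m` copies of each index.
lemma exists_pairwise_disjoint_card_eq_of_forall_mul_card_le_card_biUnion {m : ℕ}
    {t : ι → Finset α} (h : ∀ S : Finset ι, m * #S ≤ #(S.biUnion t)) :
    ∃ sel : ι → Finset α, (∀ a, #(sel a) = m ∧ sel a ⊆ t a) ∧
      ∀ a b, a ≠ b → Disjoint (sel a) (sel b) := by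
  classical
  have hall_copies : ∀ P : Finset (ι × Fin m), #P ≤ #(P.biUnion fun p => t p.1) := by
    intro P
    calc #P ≤ #(P.image Prod.fst ×ˢ (Finset.univ : Finset (Fin m))) :=
          Finset.card_le_card fun p hp => by
            simpa using (⟨p.2, hp⟩ : ∃ j, (p.1, j) ∈ P)
      _ = m * #(P.image Prod.fst) := by
          rw [Finset.card_product, Finset.card_fin, mul_comm]
      _ ≤ #((P.image Prod.fst).biUnion t) := h _
      _ = #(P.biUnion fun p => t p.1) := by rw [Finset.image_biUnion]
  obtain ⟨f, f_injective, f_mem⟩ :=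
    (Finset.all_card_le_biUnion_card_iff_exists_injective _).1 hall_copies
  refine ⟨fun a => Finset.univ.image fun j => f (a, j), fun a => ⟨?_, ?_⟩, fun a b hab => ?_⟩
  · exact (Finset.card_image_of_injective _
      (f_injective.comp (Prod.mk_right_injective a))).trans (Finset.card_fin m)
  · exact Finset.image_subset_iff.2 fun j _ => f_mem (a, j)
  · simp only [Finset.disjoint_left, Finset.mem_image, Finset.mem_univ, true_and]
    rintro _ ⟨i, rfl⟩ ⟨j, hj⟩
    exact hab (congrArg Prod.fst (f_injective hj)).symm

end Hall

section Events

variable {ι : Type*} {κ : ι → Type*} {α : Type*}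

/-- The event that every color sampled by an agent in `S` lies in `T`, where `κ a` indexes the
list of agent `a`. -/
def confinedTo (κ : ι → Type*) (S : Finset ι) (T : Finset α) : Set (∀ a, κ a → α) :=
  {x | ∀ a ∈ S, ∀ i, x a i ∈ T}

/-- The event that Hall's condition for selecting `m` colors per agent fails: some set `S` of
agents samples fewer than `m * #S` colors altogether. -/
def hallViolation (κ : ι → Type*) [∀ a, Fintype (κ a)] (α : Type*) [DecidableEq α]
    (m : ℕ) : Set (∀ a, κ a → α) :=
  {x | ∃ S : Finset ι, #(S.biUnion fun a => Finset.univ.image (x a)) < m * #S}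

variable [Fintype ι] [∀ a, Fintype (κ a)]

lemma measure_pi_confinedTo [MeasurableSpace α] (μ : Measure α) [IsProbabilityMeasure μ]
    (S : Finset ι) (T : Finset α) :
    Measure.pi (fun a => Measure.pi fun _ : κ a => μ) (confinedTo κ S T)
      = μ T ^ ∑ a ∈ S, Fintype.card (κ a) := by
  have confinedTo_eq_pi :
      confinedTo κ S T = (S : Set ι).pi fun _ => Set.univ.pi fun _ => (T : Set α) := by
    ext x; simp [confinedTo]
  simp_rw [confinedTo_eq_pi, Measure.pi_pi_finset, Measure.pi_pi, Finset.prod_const,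
    Finset.card_univ, Finset.prod_pow_eq_pow_sum]

variable [Fintype α] [DecidableEq α] {m : ℕ}

lemma hallViolation_subset_iUnion_confinedTo (h : m * Fintype.card ι ≤ Fintype.card α) :
    hallViolation κ α m ⊆ ⋃ k ∈ Finset.Icc 1 (Fintype.card ι),
      ⋃ S ∈ Finset.powersetCard k (Finset.univ : Finset ι),
        ⋃ T ∈ Finset.powersetCard (m * k) (Finset.univ : Finset α), confinedTo κ S T := by
  rintro x ⟨S, hS⟩
  have card_S_pos : 0 < #S := Nat.pos_of_mul_pos_left (Nat.zero_lt_of_lt hS)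
  obtain ⟨T, sampled_subset, card_T⟩ := Finset.exists_superset_card_eq hS.le
    ((Nat.mul_le_mul_left m (Finset.card_le_univ S)).trans h)
  simp only [Set.mem_iUnion, Finset.mem_Icc, Finset.mem_powersetCard_univ, exists_prop]
  exact ⟨#S, ⟨card_S_pos, Finset.card_le_univ S⟩, S, rfl, T, card_T, fun a ha i =>
    sampled_subset (Finset.mem_biUnion.2 ⟨a, ha, Finset.mem_image_of_mem _ (Finset.mem_univ i)⟩)⟩

lemma measure_hallViolation_le_sum [MeasurableSpace (∀ a, κ a → α)]
    (P : Measure (∀ a, κ a → α)) (h : m * Fintype.card ι ≤ Fintype.card α) {p : ℕ → ℝ≥0∞}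
    (hp : ∀ (S : Finset ι) (T : Finset α), #T = m * #S → P (confinedTo κ S T) ≤ p #S) :
    P (hallViolation κ α m) ≤ ∑ k ∈ Finset.Icc 1 (Fintype.card ι),
      (Fintype.card ι).choose k * ((Fintype.card α).choose (m * k) * p k) := by
  refine (measure_mono (hallViolation_subset_iUnion_confinedTo h)).trans <|
    (measure_biUnion_finset_le _ _).trans <| Finset.sum_le_sum fun k _ => ?_
  rw [← Finset.card_univ (α := ι), ← Finset.card_univ (α := α), ← Finset.card_powersetCard,
    ← Finset.card_powersetCard, ← nsmul_eq_mul, ← nsmul_eq_mul]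
  refine (measure_biUnion_finset_le _ _).trans <| Finset.sum_le_card_nsmul _ _ _ fun S hS =>
    (measure_biUnion_finset_le _ _).trans <| Finset.sum_le_card_nsmul _ _ _ fun T hT => ?_
  rw [Finset.mem_powersetCard_univ] at hS hT
  subst hS
  exact hp S T hT

end Events

section Binomial

lemma choose_le_exp_one_mul_div_pow_s15 (N j : ℕ) :
    (N.choose j : ℝ) ≤ (Real.exp 1 * (N / j)) ^ j := by
  rcases j.eq_zero_or_pos with rfl | hj
  · simp
  calc (N.choose j : ℝ) ≤ N ^ j / j.factorial := Nat.choose_le_pow_div j N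
    _ = (j : ℝ) ^ j / j.factorial * (N / j) ^ j := by rw [div_pow]; field_simp
    _ ≤ Real.exp j * (N / j) ^ j := by
        gcongr
        exact Real.pow_div_factorial_le_exp _ j.cast_nonneg _
    _ = (Real.exp 1 * (N / j)) ^ j := by rw [mul_pow, Real.exp_one_pow]

lemma choose_mul_choose_mul_pow_le_s15 {N C m k : ℕ} {ρ : ℝ} (hm : 0 < m) (hk : 0 < k) (hkN : k ≤ N)
    (hρ : ρ ≤ 1) (hNC : (m * N : ℝ) ≤ ρ * C) (t : ℕ) :
    (N.choose k : ℝ) * (C.choose (m * k) * ((m * k : ℕ) / C : ℝ) ^ (k * (m + 1 + t)))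
      ≤ (Real.exp 1 ^ (m + 1) * ρ ^ t) ^ k := by
  have hm' : (0 : ℝ) < m := by exact_mod_cast hm
  have hk' : (0 : ℝ) < k := by exact_mod_cast hk
  have hkN' : (k : ℝ) ≤ N := by exact_mod_cast hkN
  have hmN : (m * N : ℝ) ≤ C := hNC.trans (mul_le_of_le_one_left C.cast_nonneg hρ)
  have hC : (0 : ℝ) < C := lt_of_lt_of_le (mul_pos hm' (hk'.trans_le hkN')) hmN
  set y : ℝ := (m * k : ℕ) / C with hy
  have y_pos : 0 < y := by positivity
  have y_le : y ≤ ρ := by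
    rw [hy, div_le_iff₀ hC, Nat.cast_mul]
    exact (mul_le_mul_of_nonneg_left hkN' hm'.le).trans hNC
  have div_le_inv : (N / k : ℝ) ≤ y⁻¹ := by
    rw [hy, inv_div, div_le_div_iff₀ hk' (by positivity), Nat.cast_mul]
    nlinarith
  have choose_N_le : (N.choose k : ℝ) ≤ (Real.exp 1 * y⁻¹) ^ k :=
    (choose_le_exp_one_mul_div_pow_s15 N k).trans (by gcongr)
  have choose_C_le : (C.choose (m * k) : ℝ) ≤ (Real.exp 1 * y⁻¹) ^ (m * k) := by
    simpa only [hy, inv_div] using choose_le_exp_one_mul_div_pow_s15 C (m * k)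
  calc (N.choose k : ℝ) * (C.choose (m * k) * y ^ (k * (m + 1 + t)))
      ≤ (Real.exp 1 * y⁻¹) ^ k * ((Real.exp 1 * y⁻¹) ^ (m * k) * y ^ (k * (m + 1 + t))) := by
        gcongr
    _ = ((Real.exp 1 * y⁻¹ * y) ^ (m + 1) * y ^ t) ^ k := by ring
    _ = (Real.exp 1 ^ (m + 1) * y ^ t) ^ k := by rw [inv_mul_cancel_right₀ y_pos.ne']
    _ ≤ (Real.exp 1 ^ (m + 1) * ρ ^ t) ^ k := by gcongr

lemma sum_Icc_one_pow_le_mul_inv_one_sub (ε : ℝ≥0∞) (N : ℕ) :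
    ∑ k ∈ Finset.Icc 1 N, ε ^ k ≤ ε * (1 - ε)⁻¹ := by
  rw [← Finset.Ico_add_one_right_eq_Icc, Finset.sum_Ico_eq_sum_range,
    ← ENNReal.tsum_geometric_add_one]
  simpa only [add_comm 1] using ENNReal.sum_le_tsum _

end Binomial

section UniformSampling

variable {α : Type*} [Fintype α] [Nonempty α] [MeasurableSpace α]

instance isProbabilityMeasure_uniformOn_univ :
    IsProbabilityMeasure (uniformOn (Finset.univ : Finset α)) := by
  rw [uniformOn, dif_pos Finset.univ_nonempty]
  infer_instance

lemma uniformOn_univ_apply [MeasurableSingletonClass α] (T : Finset α) :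
    uniformOn (Finset.univ : Finset α) T = ENNReal.ofReal (#T / Fintype.card α) := by
  classical
  rw [uniformOn, dif_pos Finset.univ_nonempty,
    PMF.toMeasure_uniformOfFinset_apply _ _ T.measurableSet,
    ENNReal.ofReal_div_of_pos (by exact_mod_cast Fintype.card_pos)]
  simp

variable [MeasurableSingletonClass α]
variable {ι : Type*} [Fintype ι] {κ : ι → Type*} [∀ a, Fintype (κ a)]

lemma measure_confinedTo_le {s : ℕ} (hs : ∀ a, s ≤ Fintype.card (κ a)) (S : Finset ι)
    (T : Finset α) :
    Measure.pi (fun a => Measure.pi fun _ : κ a => uniformOn (Finset.univ : Finset α))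
      (confinedTo κ S T) ≤ ENNReal.ofReal ((#T / Fintype.card α) ^ (#S * s)) := by
  rw [measure_pi_confinedTo, ENNReal.ofReal_pow (by positivity), ← uniformOn_univ_apply]
  exact pow_le_pow_right_of_le_one' prob_le_one (S.card_nsmul_le_sum _ s fun a _ => hs a)

lemma measure_hallViolation_le [DecidableEq α] {m t : ℕ} {ρ : ℝ} (hm : 0 < m) (hρ : ρ ≤ 1)
    (hcard : (m * Fintype.card ι : ℝ) ≤ ρ * Fintype.card α)
    (hκ : ∀ a, m + 1 + t ≤ Fintype.card (κ a)) :
    Measure.pi (fun a => Measure.pi fun _ : κ a => uniformOn (Finset.univ : Finset α))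
      (hallViolation κ α m) ≤ ENNReal.ofReal (Real.exp 1 ^ (m + 1) * ρ ^ t) *
        (1 - ENNReal.ofReal (Real.exp 1 ^ (m + 1) * ρ ^ t))⁻¹ := by
  have card_le : m * Fintype.card ι ≤ Fintype.card α := by
    exact_mod_cast hcard.trans (mul_le_of_le_one_left (Nat.cast_nonneg _) hρ)
  have ρ_nonneg : 0 ≤ ρ :=
    nonneg_of_mul_nonneg_left ((by positivity : (0 : ℝ) ≤ m * Fintype.card ι).trans hcard)
      (by exact_mod_cast Fintype.card_pos)
  refine (measure_hallViolation_le_sum _ card_le (p := fun k =>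
      ENNReal.ofReal (((m * k : ℕ) / Fintype.card α) ^ (k * (m + 1 + t))))
    fun S T hT => hT ▸ measure_confinedTo_le hκ S T).trans <|
    (Finset.sum_le_sum fun k hk => ?_).trans <| sum_Icc_one_pow_le_mul_inv_one_sub _ _
  obtain ⟨k_pos, k_le⟩ := Finset.mem_Icc.1 hk
  rw [← ENNReal.ofReal_pow (by positivity), ← ENNReal.ofReal_natCast, ← ENNReal.ofReal_natCast,
    ← ENNReal.ofReal_mul (by positivity), ← ENNReal.ofReal_mul (by positivity)]
  exact ENNReal.ofReal_le_ofReal (choose_mul_choose_mul_pow_le_s15 hm k_pos k_le hρ hcard t)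

end UniformSampling

section Rainbow

variable {r C : ℕ} {ℓ : Fin (2 * r) → ℕ}

lemma compl_canSelectThreeRainbow_subset_hallViolation :
    {x : ∀ a, Fin (ℓ a) → Fin C | CanSelectThreeRainbow x}ᶜ ⊆
      hallViolation (fun a => Fin (ℓ a)) (Fin C) 3 := by
  intro x hx
  by_contra hall
  simp only [hallViolation, Set.mem_ofPred_eq, not_exists, not_lt] at hall
  obtain ⟨sel, hsel, disjoint_sel⟩ :=
    exists_pairwise_disjoint_card_eq_of_forall_mul_card_le_card_biUnion hall
  exact hx ⟨sel, fun a => ⟨(hsel a).1, fun c hc => by simpa using (hsel a).2 hc⟩, disjoint_sel⟩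

lemma isProbabilityMeasure_samplingM (hC : 0 < C) (ℓ : Fin (2 * r) → ℕ) :
    IsProbabilityMeasure (samplingM r C ℓ) := by
  have : Nonempty (Fin C) := ⟨⟨0, hC⟩⟩
  unfold samplingM
  infer_instance

lemma samplingM_compl_canSelectThreeRainbow_le {t : ℕ} {ρ : ℝ} (hC : 0 < C) (hρ : ρ ≤ 1)
    (hrC : 6 * (r : ℝ) ≤ ρ * C) (hℓ : ∀ a, 4 + t ≤ ℓ a) :
    samplingM r C ℓ {x | CanSelectThreeRainbow x}ᶜ ≤
      ENNReal.ofReal (Real.exp 1 ^ 4 * ρ ^ t) *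
        (1 - ENNReal.ofReal (Real.exp 1 ^ 4 * ρ ^ t))⁻¹ := by
  have : Nonempty (Fin C) := ⟨⟨0, hC⟩⟩
  refine (measure_mono compl_canSelectThreeRainbow_subset_hallViolation).trans
    (measure_hallViolation_le three_pos hρ ?_ (by simpa using hℓ))
  simp only [Fintype.card_fin]
  push_cast
  linarith

end Rainbow

section Asymptotics

lemma tendsto_mul_inv_one_sub_ofReal_mul_pow {c ρ : ℝ} (hρ₀ : 0 ≤ ρ) (hρ₁ : ρ < 1) :
    Tendsto (fun t : ℕ => ENNReal.ofReal (c * ρ ^ t) * (1 - ENNReal.ofReal (c * ρ ^ t))⁻¹)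
      atTop (nhds 0) := by
  have ratio_tendsto : Tendsto (fun t : ℕ => ENNReal.ofReal (c * ρ ^ t)) atTop (nhds 0) := by
    simpa using ENNReal.tendsto_ofReal
      ((tendsto_pow_atTop_nhds_zero_of_lt_one hρ₀ hρ₁).const_mul c)
  have inv_tendsto :=
    (ENNReal.Tendsto.sub tendsto_const_nhds ratio_tendsto (Or.inl ENNReal.one_ne_top)).inv
  simpa using ENNReal.Tendsto.mul ratio_tendsto (Or.inr (by simp)) inv_tendsto (Or.inr (by simp))

lemma tendsto_rpow_div_log_atTop {p : ℝ} (hp : 0 < p) :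
    Tendsto (fun x : ℝ => x ^ p / Real.log x) atTop atTop := by
  have log_div_rpow_pos : ∀ᶠ x : ℝ in atTop, Real.log x / x ^ p ∈ Set.Ioi 0 := by
    filter_upwards [eventually_gt_atTop 1] with x hx
    exact div_pos (Real.log_pos hx) (Real.rpow_pos_of_pos (one_pos.trans hx) p)
  refine (tendsto_nhdsWithin_iff.2 ⟨(isLittleO_log_rpow_atTop hp).tendsto_div_nhds_zero,
    log_div_rpow_pos⟩).inv_tendsto_nhdsGT_zero.congr fun x => ?_
  rw [Pi.inv_apply, inv_div]

lemma mul_le_floor_mul_of_div_le {c r : ℕ} {θ L x : ℝ} (hc : 0 < c) (hθ : 0 < θ) (hL : c / θ ≤ L)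
    (hr : r ≤ x / L) : c * r ≤ ⌊θ * x⌋₊ := by
  have hL₀ : 0 < L := lt_of_lt_of_le (by positivity) hL
  apply Nat.le_floor
  calc ((c * r : ℕ) : ℝ) = c * r := Nat.cast_mul c r
    _ ≤ L * θ * r := by gcongr; exact (div_le_iff₀ hθ).1 hL
    _ = θ * (r * L) := by ring
    _ ≤ θ * x := by gcongr; exact (le_div_iff₀ hL₀).1 hr

lemma rpow_div_log_le_div_mul_mul {b d q y L β : ℝ} (hb : 0 ≤ b) (hd : 0 ≤ d) (hy : 1 < y)
    (hL₀ : 0 < L) (hL : L ≤ y ^ q) (hβ : b / Real.log y ≤ β) :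
    b / d * (y ^ (1 - q) / Real.log y) ≤ β / (d * L) * y := by
  have hy₀ : 0 < y := one_pos.trans hy
  have hlog : 0 < Real.log y := Real.log_pos hy
  have rpow_le_div : y ^ (1 - q) ≤ y / L := by
    rw [Real.rpow_sub hy₀, Real.rpow_one]
    gcongr
  calc b / d * (y ^ (1 - q) / Real.log y) = b / Real.log y * y ^ (1 - q) / d := by ring
    _ ≤ β * (y / L) / d := by
        have : 0 ≤ β := (div_nonneg hb hlog.le).trans hβ
        gcongr
    _ = β / (d * L) * y := by ring

variable {θ₁ L β : ℕ → ℝ} {r : ℕ → ℕ}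

lemma eventually_palette_large (hθ : ∀ᶠ n : ℕ in atTop, 0 < θ₁ n)
    (hL : ∀ᶠ n : ℕ in atTop, 7 / θ₁ n ≤ L n)
    (hr : ∀ᶠ n : ℕ in atTop, 0 < r n ∧ (r n : ℝ) ≤ n / L n) :
    ∀ᶠ n : ℕ in atTop, 0 < ⌊θ₁ n * n⌋₊ ∧ 6 * (r n : ℝ) ≤ 6 / 7 * ⌊θ₁ n * n⌋₊ := by
  filter_upwards [hθ, hL, hr] with n hθ hL ⟨r_pos, r_le⟩
  have seven_mul_le : 7 * r n ≤ ⌊θ₁ n * n⌋₊ :=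
    mul_le_floor_mul_of_div_le (by norm_num) hθ (by exact_mod_cast hL) r_le
  have seven_mul_le' : (7 * r n : ℝ) ≤ ⌊θ₁ n * n⌋₊ := by exact_mod_cast seven_mul_le
  exact ⟨by lia, by linarith⟩

lemma eventually_lists_long {ℓ : ∀ n : ℕ, Fin (2 * r n) → ℕ}
    (hL : ∀ᶠ n : ℕ in atTop, 0 < L n ∧ L n ≤ Real.log n ^ ((1 : ℝ) / 6))
    (hβ : ∀ᶠ n : ℕ in atTop, 277 / Real.log (Real.log n) ≤ β n)
    (hℓ : ∀ᶠ n : ℕ in atTop, ∀ a : Fin (2 * r n),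
      β n / (200 * L n) * Real.log n ≤ ℓ n a) (s : ℕ) :
    ∀ᶠ n : ℕ in atTop, ∀ a, s ≤ ℓ n a := by
  have log_tendsto : Tendsto (fun n : ℕ => Real.log n) atTop atTop :=
    Real.tendsto_log_atTop.comp tendsto_natCast_atTop_atTop
  have bound_tendsto : Tendsto (fun y : ℝ => 277 / 200 * (y ^ (1 - 1 / 6 : ℝ) / Real.log y))
      atTop atTop :=
    (tendsto_rpow_div_log_atTop (by norm_num)).const_mul_atTop (by norm_num)
  filter_upwards [hL, hβ, hℓ, log_tendsto.eventually_gt_atTop 1,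
    (bound_tendsto.comp log_tendsto).eventually_ge_atTop (s : ℝ)]
    with n ⟨L_pos, L_le⟩ hβ hℓ log_gt s_le a
  exact_mod_cast s_le.trans <| (rpow_div_log_le_div_mul_mul (by norm_num) (by norm_num) log_gt
    L_pos L_le hβ).trans (hℓ a)

end Asymptotics

theorem select_three_rainbow_whp_general {ι : Type*} {l : Filter ι} {r C : ι → ℕ}
    {ℓ : ∀ i, Fin (2 * r i) → ℕ} {ρ : ℝ} (hρ₀ : 0 ≤ ρ) (hρ₁ : ρ < 1)
    (hC : ∀ᶠ i in l, 0 < C i ∧ 6 * (r i : ℝ) ≤ ρ * C i)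
    (hℓ : ∀ s : ℕ, ∀ᶠ i in l, ∀ a, s ≤ ℓ i a) :
    Tendsto (fun i => samplingM (r i) (C i) (ℓ i) {x | CanSelectThreeRainbow x}) l (nhds 1) := by
  have failure_tendsto : Tendsto
      (fun i => samplingM (r i) (C i) (ℓ i) {x | CanSelectThreeRainbow x}ᶜ) l (nhds 0) := by
    refine ENNReal.tendsto_nhds_zero.2 fun δ hδ => ?_
    obtain ⟨t, ht⟩ :=
      ((tendsto_mul_inv_one_sub_ofReal_mul_pow hρ₀ hρ₁).eventually_le_const hδ).exists
    filter_upwards [hC, hℓ (4 + t)] with i ⟨C_pos, hrC⟩ hℓ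
    exact (samplingM_compl_canSelectThreeRainbow_le C_pos hρ₁.le hrC hℓ).trans ht
  have one_sub_tendsto :=
    ENNReal.Tendsto.sub tendsto_const_nhds failure_tendsto (Or.inl ENNReal.one_ne_top)
  rw [tsub_zero] at one_sub_tendsto
  refine one_sub_tendsto.congr' ?_
  filter_upwards [hC] with i ⟨C_pos, _⟩
  have := isProbabilityMeasure_samplingM C_pos (ℓ i)
  rw [← prob_compl_eq_one_sub MeasurableSet.of_discrete, compl_compl]

/-- Let `θ₁ ∈ (0,1]`, `7/θ₁ ≤ L ≤ (log n)^{1/6}`,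
`β ≥ 277/(log log n)`, and let `r` be a positive integer with `r ≤ n/L`.  If each of `2r`
agents independently samples at least `(β/(200L))·log n` colors uniformly at random from a
palette of `⌊θ₁·n⌋` colors, then whp one can select `3` colors from each agent's list with
all `6r` selected colors pairwise distinct. -/
theorem select_three_rainbow_whp (θ₁ L β : ℕ → ℝ) (r : ℕ → ℕ)
    (ℓ : ∀ n : ℕ, Fin (2 * r n) → ℕ)
    (hθ : ∀ᶠ n : ℕ in atTop, 0 < θ₁ n ∧ θ₁ n ≤ 1)
    (hL : ∀ᶠ n : ℕ in atTop, 7 / θ₁ n ≤ L n ∧ L n ≤ Real.log n ^ ((1 : ℝ) / 6))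
    (hβ : ∀ᶠ n : ℕ in atTop, 277 / Real.log (Real.log n) ≤ β n)
    (hr : ∀ᶠ n : ℕ in atTop, 0 < r n ∧ (r n : ℝ) ≤ n / L n)
    (hℓ : ∀ᶠ n : ℕ in atTop, ∀ a : Fin (2 * r n),
      β n / (200 * L n) * Real.log n ≤ ℓ n a) :
    Tendsto
      (fun n : ℕ =>
        samplingM (r n) ⌊θ₁ n * n⌋₊ (ℓ n) {x | CanSelectThreeRainbow x})
      atTop (nhds 1) := by
  have hL₀ : ∀ᶠ n : ℕ in atTop, 0 < L n := by
    filter_upwards [hθ, hL] with n hθ hL using (div_pos (by norm_num) hθ.1).trans_le hL.1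
  exact select_three_rainbow_whp_general (ρ := 6 / 7) (by norm_num) (by norm_num)
    (eventually_palette_large (hθ.mono fun _ h => h.1) (hL.mono fun _ h => h.1) hr)
    (eventually_lists_long (hL₀.and (hL.mono fun _ h => h.2)) hβ hℓ)
end
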